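/- Define, on the open set of (c₀, …, c₈) ∈ ℂ⁹ where c₄, c₅, c₇, c₈ are all nonzero, the functions C₉ = (−c₂c₆ + c₄c₇)/c₈, C₁₀ = (−c₁c₃ + c₀c₄)/c₅, C₁₁ = (−c₂c₃c₆ + c₃c₄c₇ + c₀c₂c₈)/(c₇c₈), C₁₂ = (c₀c₄(−c₂c₆ + c₄c₇) + c₁(c₂c₃c₆ − c₃c₄c₇ − c₅c₆c₈))/(c₄c₅c₈), and the map F : (c₀, …, c₈) ↦ (c₁, c₂, c₃, C₁₂, C₁₀, c₆, C₁₁, C₉, −c₀). Let α ∈ ℂ satisfy α³ + α² + α − 1 = 0 and let p = (1, 1, 1, 1, α, −α−α², −α−α², −α, −1). Then F is differentiable at p, and the 9×9 Jacobian matrix J of F at p (with entries J_{ij} = ∂F_i/∂c_j evaluated at p) satisfies det(t·I₉ − J) = t⁹ + (2α²+4α+2)t⁸ + (4α²+6α+6)t⁷ + (6α²+4α+8)t⁶ + (−2α²+4α+3)t⁵ + (2α²−4α−3)t⁴ − (6α²+4α+8)t³ − (4α²+6α+6)t² − (2α²+4α+2)t − 1 for all t ∈ ℂ. -/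

import Mathlib

/-!
The top surface of the fibration is obtained from the bottom one by four flips, followed by a
relabelling of the edges. In the given numbering the relabelling is the negacyclic shift
`S : (v₀, …, v₈) ↦ (v₁, …, v₈, -v₀)`, so the Jacobian matrix is `S * D`, where `D` differs from the
identity only in the rows `4, 5, 7, 8` of the flipped edges. The rows of `D` come from implicit
differentiation of the four Ptolemy equations at `p`, which is a fixed point of the map. Since `S`
is orthogonal, `det (t - S * D) = det (D - t * Sᵀ)`, and in the latter matrix the rows of the five
edges that are not flipped form a unitriangular system. Eliminating these edges leaves a `4 × 4`
determinant.
-/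

open Matrix

section Determinants

variable {R : Type*} [CommRing R]

theorem det_fromBlocks_of_mul_eq {m n : Type*} [Fintype m] [DecidableEq m] [Fintype n]
    [DecidableEq n] {A : Matrix m m R} {B X : Matrix m n R} (C : Matrix n m R) (D : Matrix n n R)
    (hX : A * X = B) : (fromBlocks A B C D).det = A.det * (D - C * X).det := by
  have hfactor : fromBlocks A B C D = fromBlocks A 0 C (D - C * X) * fromBlocks 1 X 0 1 := by
    simp [fromBlocks_multiply, hX]
  rw [hfactor, det_mul, det_fromBlocks_zero₁₂, det_fromBlocks_zero₂₁, det_one, det_one, mul_one,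
    mul_one]

theorem det_fin_four (A : Matrix (Fin 4) (Fin 4) R) :
    A.det =
      A 0 0 * !![A 1 1, A 1 2, A 1 3; A 2 1, A 2 2, A 2 3; A 3 1, A 3 2, A 3 3].det
        - A 0 1 * !![A 1 0, A 1 2, A 1 3; A 2 0, A 2 2, A 2 3; A 3 0, A 3 2, A 3 3].det
        + A 0 2 * !![A 1 0, A 1 1, A 1 3; A 2 0, A 2 1, A 2 3; A 3 0, A 3 1, A 3 3].det
        - A 0 3 * !![A 1 0, A 1 1, A 1 2; A 2 0, A 2 1, A 2 2; A 3 0, A 3 1, A 3 2].det := by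
  simp only [det_succ_row_zero A, Fin.sum_univ_four, det_fin_three, submatrix_apply, Fin.succAbove,
    Fin.reduceSucc, Fin.reduceCastSucc, Fin.reduceLT, Fin.coe_ofNat_eq_mod, if_true, if_false,
    of_apply, cons_val]
  ring

variable (R) in
/-- The matrix of the negacyclic shift `(v₀, …, vₙ) ↦ (v₁, …, vₙ, -v₀)`. -/
def negacyclicShift (n : ℕ) : Matrix (Fin (n + 1)) (Fin (n + 1)) R :=
  diagonal (Function.update 1 (Fin.last n) (-1)) * (finRotate (n + 1)).permMatrix R

theorem negacyclicShift_apply (n : ℕ) (i j : Fin (n + 1)) :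
    negacyclicShift R n i j = if i + 1 = j then if i = Fin.last n then -1 else 1 else 0 := by
  simp [negacyclicShift, PEquiv.toMatrix_apply, Function.update_apply, eq_comm]

theorem negacyclicShift_mulVec {n : ℕ} (v : Fin (n + 1) → R) (i : Fin (n + 1)) :
    (negacyclicShift R n *ᵥ v) i = if i = Fin.last n then -v 0 else v (i + 1) := by
  by_cases hi : i = Fin.last n <;>
    simp [mulVec, dotProduct, negacyclicShift_apply, hi]

theorem det_negacyclicShift (n : ℕ) : (negacyclicShift R n).det = (-1) ^ (n + 1) := by
  simp [negacyclicShift, det_diagonal, Finset.prod_update_of_mem, sign_finRotate, pow_succ']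

theorem negacyclicShift_mul_transpose (n : ℕ) :
    negacyclicShift R n * (negacyclicShift R n)ᵀ = 1 := by
  have hsign : (fun i : Fin (n + 1) ↦ Function.update (1 : Fin (n + 1) → R) (Fin.last n) (-1) i *
      Function.update (1 : Fin (n + 1) → R) (Fin.last n) (-1) i) = 1 := by
    ext i
    by_cases hi : i = Fin.last n <;> simp [hi]
  rw [negacyclicShift, transpose_mul, diagonal_transpose, transpose_permMatrix, Matrix.mul_assoc,
    ← Matrix.mul_assoc (Equiv.Perm.permMatrix R _), ← permMatrix_mul, inv_mul_cancel,
    permMatrix_one, Matrix.one_mul, diagonal_mul_diagonal, hsign]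
  exact diagonal_one

theorem det_smul_one_sub_negacyclicShift_mul {n : ℕ} (t : R)
    (M : Matrix (Fin (n + 1)) (Fin (n + 1)) R) :
    (t • 1 - negacyclicShift R n * M).det = (M - t • (negacyclicShift R n)ᵀ).det := by
  have hfactor : t • 1 - negacyclicShift R n * M =
      negacyclicShift R n * -(M - t • (negacyclicShift R n)ᵀ) := by
    rw [neg_sub, Matrix.mul_sub, Matrix.mul_smul, negacyclicShift_mul_transpose]
  rw [hfactor, det_mul, det_neg, Fintype.card_fin, det_negacyclicShift, ← mul_assoc, ← mul_pow]
  simp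

end Determinants

section Analysis

variable {𝕜 : Type*} [NontriviallyNormedField 𝕜]

theorem hasFDerivAt_div_of_smul_add_smul_eq {E : Type*} [NormedAddCommGroup E] [NormedSpace 𝕜 E]
    {f g : E → 𝕜} {f' g' L : E →L[𝕜] 𝕜} {x : E} {q : 𝕜} (hf : HasFDerivAt f f' x)
    (hg : HasFDerivAt g g' x) (hgx : g x ≠ 0) (hq : g x * q = f x) (hL : g x • L + q • g' = f') :
    HasFDerivAt (fun y ↦ f y / g y) L x := by
  have hinv := (hasDerivAt_inv hgx).comp_hasFDerivAt x hg
  simp only [div_eq_mul_inv]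
  refine (hf.mul hinv).congr_fderiv ?_
  ext v
  simp only [← hL, ← hq, Function.comp_apply, _root_.add_apply, _root_.smul_apply, smul_eq_mul]
  field_simp
  ring

variable {m n : Type*} [Fintype n]

/-- The linear functional `v ↦ r ⬝ᵥ v`, bundled as a continuous linear map. -/
def dotProductL (r : n → 𝕜) : (n → 𝕜) →L[𝕜] 𝕜 :=
  ∑ j, r j • ContinuousLinearMap.proj j

theorem dotProductL_apply (r v : n → 𝕜) : dotProductL r v = r ⬝ᵥ v := by
  simp [dotProductL, dotProduct]

theorem dotProductL_single [DecidableEq n] (k : n) :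
    dotProductL (Pi.single k (1 : 𝕜)) = ContinuousLinearMap.proj k := by
  ext v
  simp [dotProductL_apply]

/-- `F` is differentiable at `x` with Jacobian matrix `J`. The derivative is assembled from the rows
of `J`, so that no completeness of `𝕜` is needed to make it continuous. -/
def HasJacobianAt (F : (n → 𝕜) → m → 𝕜) (J : Matrix m n 𝕜) (x : n → 𝕜) : Prop :=
  HasFDerivAt F (ContinuousLinearMap.pi fun i ↦ dotProductL (J i)) x

theorem hasJacobianAt_iff {F : (n → 𝕜) → m → 𝕜} {J : Matrix m n 𝕜} {x : n → 𝕜} :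
    HasJacobianAt F J x ↔ ∀ i, HasFDerivAt (fun y ↦ F y i) (dotProductL (J i)) x :=
  hasFDerivAt_pi

namespace HasJacobianAt

theorem toMatrix'_fderiv [DecidableEq n] {F : (n → 𝕜) → m → 𝕜} {J : Matrix m n 𝕜} {x : n → 𝕜}
    (hF : HasJacobianAt F J x) : LinearMap.toMatrix' (fderiv 𝕜 F x).toLinearMap = J := by
  rw [HasFDerivAt.fderiv hF]
  ext i j
  simp [LinearMap.toMatrix'_apply, dotProductL_apply]

theorem mulVec_left {l : Type*} [Finite l] [Fintype m] (A : Matrix l m 𝕜) {F : (n → 𝕜) → m → 𝕜}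
    {J : Matrix m n 𝕜} {x : n → 𝕜} (hF : HasJacobianAt F J x) :
    HasJacobianAt (fun y ↦ A *ᵥ F y) (A * J) x := by
  refine hasJacobianAt_iff.2 fun i ↦ ?_
  refine ((dotProductL (A i)).hasFDerivAt.comp x hF).congr_fderiv ?_ |>.congr_of_eventuallyEq ?_
  · ext v
    have hJv : (ContinuousLinearMap.pi fun i ↦ dotProductL (J i)) v = J *ᵥ v :=
      funext fun i ↦ dotProductL_apply (J i) v
    rw [ContinuousLinearMap.comp_apply, hJv, dotProductL_apply, dotProductL_apply]
    exact congrFun (mulVec_mulVec v A J) i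
  · filter_upwards with y
    simp [dotProductL_apply, mulVec]

end HasJacobianAt

end Analysis

namespace M036

section Elimination

variable {R : Type*} [CommRing R]

/-- The identity matrix with rows `4, 5, 7, 8` replaced: the shape of the Jacobian matrix of a map
that changes only the coordinates `4, 5, 7, 8`. -/
def replaceRows (r₄ r₅ r₇ r₈ : Fin 9 → R) : Matrix (Fin 9) (Fin 9) R :=
  of ![Pi.single 0 1, Pi.single 1 1, Pi.single 2 1, Pi.single 3 1, r₄, r₅, Pi.single 6 1, r₇, r₈]

/-- The splitting of the nine coordinates into the kept ones `0, 1, 2, 3, 6` and the replaced ones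
`4, 5, 7, 8`. -/
def keptSumReplaced : Fin 5 ⊕ Fin 4 ≃ Fin 9 where
  toFun := Sum.elim ![0, 1, 2, 3, 6] ![4, 5, 7, 8]
  invFun := ![.inl 0, .inl 1, .inl 2, .inl 3, .inr 0, .inr 1, .inl 4, .inr 2, .inr 3]
  left_inv := by decide
  right_inv := by decide

/-- The kept-by-kept block of `replaceRows r₄ r₅ r₇ r₈ - t • (negacyclicShift R 8)ᵀ`. -/
def keptBlock (t : R) : Matrix (Fin 5) (Fin 5) R :=
  !![1, 0, 0, 0, 0; -t, 1, 0, 0, 0; 0, -t, 1, 0, 0; 0, 0, -t, 1, 0; 0, 0, 0, 0, 1]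

theorem det_keptBlock (t : R) : (keptBlock t).det = 1 := by
  simp [keptBlock, det_succ_row_zero, Fin.sum_univ_succ]

/-- The solution of `keptBlock t * X = B`, where `B` is the kept-by-replaced block of
`replaceRows r₄ r₅ r₇ r₈ - t • (negacyclicShift R 8)ᵀ`. -/
def keptSolution (t : R) : Matrix (Fin 5) (Fin 4) R :=
  !![0, 0, 0, t; 0, 0, 0, t ^ 2; 0, 0, 0, t ^ 3; 0, 0, 0, t ^ 4; 0, -t, 0, 0]

theorem keptBlock_mul_keptSolution (t : R) :
    keptBlock t * keptSolution t =
      !![0, 0, 0, t; 0, 0, 0, 0; 0, 0, 0, 0; 0, 0, 0, 0; 0, -t, 0, 0] := by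
  ext i j
  fin_cases i <;> fin_cases j <;> simp [keptBlock, keptSolution] <;> ring

theorem replaceRows_sub_smul_transpose_submatrix (t : R) (r₄ r₅ r₇ r₈ : Fin 9 → R) :
    (replaceRows r₄ r₅ r₇ r₈ - t • (negacyclicShift R 8)ᵀ).submatrix
        keptSumReplaced keptSumReplaced =
      fromBlocks (keptBlock t) (keptBlock t * keptSolution t)
        !![r₄ 0, r₄ 1, r₄ 2, r₄ 3 - t, r₄ 6;
          r₅ 0, r₅ 1, r₅ 2, r₅ 3, r₅ 6;
          r₇ 0, r₇ 1, r₇ 2, r₇ 3, r₇ 6 - t;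
          r₈ 0, r₈ 1, r₈ 2, r₈ 3, r₈ 6]
        !![r₄ 4, r₄ 5, r₄ 7, r₄ 8;
          r₅ 4 - t, r₅ 5, r₅ 7, r₅ 8;
          r₇ 4, r₇ 5, r₇ 7, r₇ 8;
          r₈ 4, r₈ 5, r₈ 7 - t, r₈ 8] := by
  rw [keptBlock_mul_keptSolution]
  ext (i | i) (j | j) <;> fin_cases i <;> fin_cases j <;>
    simp [keptSumReplaced, keptBlock, replaceRows, negacyclicShift_apply]

/-- The covector induced by `r` on the replaced coordinates once the kept ones are eliminated. -/
def reducedRow (t : R) (r : Fin 9 → R) : Fin 4 → R :=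
  ![r 4, r 5 + t * r 6, r 7, r 8 - t * r 0 - t ^ 2 * r 1 - t ^ 3 * r 2 - t ^ 4 * r 3]

theorem det_smul_one_sub_negacyclicShift_mul_replaceRows (t : R) (r₄ r₅ r₇ r₈ : Fin 9 → R) :
    (t • 1 - negacyclicShift R 8 * replaceRows r₄ r₅ r₇ r₈).det =
      (of ![reducedRow t r₄ + ![0, 0, 0, t ^ 5], reducedRow t r₅ - ![t, 0, 0, 0],
        reducedRow t r₇ - ![0, t ^ 2, 0, 0], reducedRow t r₈ - ![0, 0, t, 0]]).det := by
  rw [det_smul_one_sub_negacyclicShift_mul, ← det_submatrix_equiv_self keptSumReplaced,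
    replaceRows_sub_smul_transpose_submatrix, det_fromBlocks_of_mul_eq _ _ rfl, det_keptBlock,
    one_mul]
  congr 1
  ext i j
  fin_cases i <;> fin_cases j <;>
    simp [keptSolution, reducedRow] <;> ring

end Elimination

section Ptolemy

variable {K : Type*} [Field K]

/-- The Ptolemy variable `c₉`, solved from `c₈ c₉ = -c₂ c₆ + c₄ c₇`. -/
def newEdge9 (c : Fin 9 → K) : K := (-(c 2 * c 6) + c 4 * c 7) / c 8

/-- The Ptolemy variable `c₁₀`, solved from `c₅ c₁₀ = -c₁ c₃ + c₀ c₄`. -/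
def newEdge10 (c : Fin 9 → K) : K := (-(c 1 * c 3) + c 0 * c 4) / c 5

/-- The Ptolemy variable `c₁₁`, solved from `c₇ c₁₁ = c₃ c₉ + c₀ c₂`. -/
def newEdge11 (c : Fin 9 → K) : K := (c 3 * newEdge9 c + c 0 * c 2) / c 7

/-- The Ptolemy variable `c₁₂`, solved from `c₄ c₁₂ = c₉ c₁₀ - c₁ c₆`. -/
def newEdge12 (c : Fin 9 → K) : K := (newEdge9 c * newEdge10 c - c 1 * c 6) / c 4

theorem newEdge11_eq {c : Fin 9 → K} (h8 : c 8 ≠ 0) :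
    newEdge11 c =
      (-(c 2 * c 3 * c 6) + c 3 * c 4 * c 7 + c 0 * c 2 * c 8) / (c 7 * c 8) := by
  unfold newEdge11 newEdge9
  field_simp

theorem newEdge12_eq {c : Fin 9 → K} (h5 : c 5 ≠ 0) (h8 : c 8 ≠ 0) :
    newEdge12 c =
      (c 0 * c 4 * (-(c 2 * c 6) + c 4 * c 7)
          + c 1 * (c 2 * c 3 * c 6 - c 3 * c 4 * c 7 - c 5 * c 6 * c 8)) / (c 4 * c 5 * c 8) := by
  unfold newEdge12 newEdge9 newEdge10
  field_simp
  ring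

/-- The flips across the four tetrahedra: the edges `4, 5, 7, 8` of the bottom surface give way to
`12, 10, 11, 9`, each new variable taking the place of the one it is opposite to. -/
def flipEdges (c : Fin 9 → K) : Fin 9 → K :=
  ![c 0, c 1, c 2, c 3, newEdge12 c, newEdge10 c, c 6, newEdge11 c, newEdge9 c]

/-- The Ptolemy variables `(c₁, c₂, c₃, c₁₂, c₁₀, c₆, c₁₁, c₉, -c₀)` of the top surface in terms of
those of the bottom surface, with the closed formulas for `c₉, …, c₁₂`. -/
def ptolemyMonodromy (c : Fin 9 → K) : Fin 9 → K :=
  ![c 1, c 2, c 3,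
    (c 0 * c 4 * (-(c 2 * c 6) + c 4 * c 7)
      + c 1 * (c 2 * c 3 * c 6 - c 3 * c 4 * c 7 - c 5 * c 6 * c 8)) / (c 4 * c 5 * c 8),
    (-(c 1 * c 3) + c 0 * c 4) / c 5,
    c 6,
    (-(c 2 * c 3 * c 6) + c 3 * c 4 * c 7 + c 0 * c 2 * c 8) / (c 7 * c 8),
    (-(c 2 * c 6) + c 4 * c 7) / c 8,
    -c 0]

theorem ptolemyMonodromy_eq_negacyclicShift_mulVec {c : Fin 9 → K} (h5 : c 5 ≠ 0) (h8 : c 8 ≠ 0) :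
    ptolemyMonodromy c = negacyclicShift K 8 *ᵥ flipEdges c := by
  rw [ptolemyMonodromy, ← newEdge11_eq h8, ← newEdge12_eq h5 h8]
  ext i
  rw [negacyclicShift_mulVec]
  fin_cases i <;> rfl

/-- The solution (4.8) of the sign-deformed Ptolemy equations with scale `c = 1`. -/
def ptolemySolution (α : K) : Fin 9 → K :=
  ![1, 1, 1, 1, α, -α - α ^ 2, -α - α ^ 2, -α, -1]

theorem newEdge9_ptolemySolution (α : K) : newEdge9 (ptolemySolution α) = -α := by
  simp only [newEdge9, ptolemySolution, cons_val]
  ring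

theorem ne_zero_of_cubic {α : K} (hα : α ^ 3 + α ^ 2 + α - 1 = 0) : α ≠ 0 :=
  left_ne_zero_of_mul_eq_one (b := α ^ 2 + α + 1) (by linear_combination hα)

theorem one_add_ne_zero_of_cubic [NeZero (2 : K)] {α : K} (hα : α ^ 3 + α ^ 2 + α - 1 = 0) :
    1 + α ≠ 0 :=
  left_ne_zero_of_mul (b := 1 + α ^ 2) <| by
    rw [show (1 + α) * (1 + α ^ 2) = 2 by linear_combination hα]
    exact two_ne_zero

theorem ptolemySolution_five_ne_zero [NeZero (2 : K)] {α : K} (hα : α ^ 3 + α ^ 2 + α - 1 = 0) :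
    ptolemySolution α 5 ≠ 0 := by
  have hfactor : ptolemySolution α 5 = -(α * (1 + α)) := by
    simp only [ptolemySolution, cons_val]
    ring
  rw [hfactor]
  exact neg_ne_zero.2 (mul_ne_zero (ne_zero_of_cubic hα) (one_add_ne_zero_of_cubic hα))

theorem newEdge10_ptolemySolution [NeZero (2 : K)] {α : K} (hα : α ^ 3 + α ^ 2 + α - 1 = 0) :
    newEdge10 (ptolemySolution α) = α := by
  rw [newEdge10, div_eq_iff (ptolemySolution_five_ne_zero hα)]
  simp only [ptolemySolution, cons_val]
  linear_combination hα

end Ptolemy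

section Gradients

variable {R : Type*} [CommRing R]

/-- The gradient of `newEdge9` at `ptolemySolution α`. -/
def gradNewEdge9 (α : R) : Fin 9 → R :=
  ![0, 0, -α - α ^ 2, 0, α, 0, 1, -α, -α]

/-- The gradient of `newEdge10` at `ptolemySolution α`, where `β` is the inverse of `1 + α`. -/
def gradNewEdge10 (α β : R) : Fin 9 → R :=
  ![-β, α + β, 0, α + β, -α - β, β, 0, 0, 0]

/-- The gradient of `newEdge11` at `ptolemySolution α`. -/
def gradNewEdge11 (α : R) : Fin 9 → R :=
  ![-1 - α - α ^ 2, 0, -α ^ 2, 1, -1, 0, -1 - α - α ^ 2, -α, 1]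

/-- The gradient of `newEdge12` at `ptolemySolution α`, where `β` is the inverse of `1 + α`. -/
def gradNewEdge12 (α β : R) : Fin 9 → R :=
  ![β, 1 - β, -α - α ^ 2, -α - β, α - β, -β, -α - α ^ 2, -α, -α]

theorem gradNewEdge9_dotProduct (α : R) (v : Fin 9 → R) :
    gradNewEdge9 α ⬝ᵥ v = -(α + α ^ 2) * v 2 + α * (v 4 - v 7 - v 8) + v 6 := by
  simp only [gradNewEdge9, dotProduct, Fin.sum_univ_castSucc, Fin.reduceCastSucc, Fin.reduceLast,
    cons_val]
  ring

theorem gradNewEdge10_dotProduct (α β : R) (v : Fin 9 → R) :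
    gradNewEdge10 α β ⬝ᵥ v = β * (v 5 - v 0) + (α + β) * (v 1 + v 3 - v 4) := by
  simp only [gradNewEdge10, dotProduct, Fin.sum_univ_castSucc, Fin.reduceCastSucc, Fin.reduceLast,
    cons_val]
  ring

theorem gradNewEdge11_dotProduct (α : R) (v : Fin 9 → R) :
    gradNewEdge11 α ⬝ᵥ v =
      -(1 + α + α ^ 2) * (v 0 + v 6) - α ^ 2 * v 2 - α * v 7 + v 3 - v 4 + v 8 := by
  simp only [gradNewEdge11, dotProduct, Fin.sum_univ_castSucc, Fin.reduceCastSucc, Fin.reduceLast,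
    cons_val]
  ring

theorem gradNewEdge12_dotProduct (α β : R) (v : Fin 9 → R) :
    gradNewEdge12 α β ⬝ᵥ v =
      β * (v 0 - v 1 - v 3 - v 4 - v 5) + v 1 - (α + α ^ 2) * (v 2 + v 6)
        + α * (v 4 - v 3 - v 7 - v 8) := by
  simp only [gradNewEdge12, dotProduct, Fin.sum_univ_castSucc, Fin.reduceCastSucc, Fin.reduceLast,
    cons_val]
  ring

/-- The Jacobian matrix of `ptolemyMonodromy` at `ptolemySolution α`, where `β` is the inverse of
`1 + α`. -/
def jacobianMonodromy (α β : R) : Matrix (Fin 9) (Fin 9) R :=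
  negacyclicShift R 8 *
    replaceRows (gradNewEdge12 α β) (gradNewEdge10 α β) (gradNewEdge11 α) (gradNewEdge9 α)

theorem det_smul_one_sub_jacobianMonodromy {α β : R} (hα : α ^ 3 + α ^ 2 + α - 1 = 0)
    (hβ : (1 + α) * β = 1) (t : R) :
    (t • 1 - jacobianMonodromy α β).det =
      t ^ 9 + (2 * α ^ 2 + 4 * α + 2) * t ^ 8 + (4 * α ^ 2 + 6 * α + 6) * t ^ 7
        + (6 * α ^ 2 + 4 * α + 8) * t ^ 6 + (-(2 * α ^ 2) + 4 * α + 3) * t ^ 5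
        + (2 * α ^ 2 - 4 * α - 3) * t ^ 4 - (6 * α ^ 2 + 4 * α + 8) * t ^ 3
        - (4 * α ^ 2 + 6 * α + 6) * t ^ 2 - (2 * α ^ 2 + 4 * α + 2) * t - 1 := by
  have hα_sq : α ^ 2 = 2 * β - 1 := by linear_combination β * hα - (1 + α ^ 2) * hβ
  rw [jacobianMonodromy, det_smul_one_sub_negacyclicShift_mul_replaceRows, det_fin_four]
  simp only [reducedRow, gradNewEdge9, gradNewEdge10, gradNewEdge11, gradNewEdge12, of_apply,
    cons_val, Pi.add_apply, Pi.sub_apply, det_fin_three]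
  grind

end Gradients

section Derivatives

variable {𝕜 : Type*} [NontriviallyNormedField 𝕜]

theorem hasFDerivAt_newEdge9 (α : 𝕜) :
    HasFDerivAt newEdge9 (dotProductL (gradNewEdge9 α)) (ptolemySolution α) := by
  have hc (k : Fin 9) := hasFDerivAt_apply (𝕜 := 𝕜) k (ptolemySolution α)
  refine hasFDerivAt_div_of_smul_add_smul_eq (q := -α)
    (((hc 2).mul (hc 6)).neg.add ((hc 4).mul (hc 7))) (hc 8) ?_ ?_ ?_
  · simp [ptolemySolution]
  · simp only [ptolemySolution, cons_val]
    ring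
  · ext v
    simp only [ptolemySolution, cons_val, _root_.add_apply, _root_.neg_apply, _root_.smul_apply,
      smul_eq_mul, dotProductL_apply, ContinuousLinearMap.proj_apply, gradNewEdge9_dotProduct]
    ring

theorem hasFDerivAt_newEdge10 [NeZero (2 : 𝕜)] {α : 𝕜} (hα : α ^ 3 + α ^ 2 + α - 1 = 0) :
    HasFDerivAt newEdge10 (dotProductL (gradNewEdge10 α (1 + α)⁻¹)) (ptolemySolution α) := by
  have hc (k : Fin 9) := hasFDerivAt_apply (𝕜 := 𝕜) k (ptolemySolution α)
  have hβ := mul_inv_cancel₀ (one_add_ne_zero_of_cubic hα)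
  refine hasFDerivAt_div_of_smul_add_smul_eq (q := α)
    (((hc 1).mul (hc 3)).neg.add ((hc 0).mul (hc 4))) (hc 5)
    (ptolemySolution_five_ne_zero hα) ?_ ?_
  · simp only [ptolemySolution, cons_val]
    linear_combination -hα
  · ext v
    simp only [ptolemySolution, cons_val, _root_.add_apply, _root_.neg_apply, _root_.smul_apply,
      smul_eq_mul, dotProductL_apply, ContinuousLinearMap.proj_apply, gradNewEdge10_dotProduct]
    linear_combination α * (v 0 - v 1 - v 3 + v 4 - v 5) * hβ - (v 1 + v 3 - v 4) * hα

theorem hasFDerivAt_newEdge11 {α : 𝕜} (hα : α ^ 3 + α ^ 2 + α - 1 = 0) :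
    HasFDerivAt newEdge11 (dotProductL (gradNewEdge11 α)) (ptolemySolution α) := by
  have hc (k : Fin 9) := hasFDerivAt_apply (𝕜 := 𝕜) k (ptolemySolution α)
  refine hasFDerivAt_div_of_smul_add_smul_eq (q := -α - α ^ 2)
    (((hc 3).mul (hasFDerivAt_newEdge9 α)).add ((hc 0).mul (hc 2))) (hc 7) ?_ ?_ ?_
  · simp [ptolemySolution, ne_zero_of_cubic hα]
  · rw [newEdge9_ptolemySolution]
    simp only [ptolemySolution, cons_val]
    linear_combination hα
  · ext v
    rw [newEdge9_ptolemySolution]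
    simp only [ptolemySolution, cons_val, _root_.add_apply, _root_.smul_apply, smul_eq_mul,
      dotProductL_apply, ContinuousLinearMap.proj_apply, gradNewEdge9_dotProduct,
      gradNewEdge11_dotProduct]
    linear_combination (v 0 + v 2 + v 6) * hα

theorem hasFDerivAt_newEdge12 [NeZero (2 : 𝕜)] {α : 𝕜} (hα : α ^ 3 + α ^ 2 + α - 1 = 0) :
    HasFDerivAt newEdge12 (dotProductL (gradNewEdge12 α (1 + α)⁻¹)) (ptolemySolution α) := by
  have hc (k : Fin 9) := hasFDerivAt_apply (𝕜 := 𝕜) k (ptolemySolution α)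
  have hβ := mul_inv_cancel₀ (one_add_ne_zero_of_cubic hα)
  refine hasFDerivAt_div_of_smul_add_smul_eq (q := 1)
    (((hasFDerivAt_newEdge9 α).mul (hasFDerivAt_newEdge10 hα)).sub ((hc 1).mul (hc 6)))
    (hc 4) ?_ ?_ ?_
  · simp [ptolemySolution, ne_zero_of_cubic hα]
  · rw [newEdge9_ptolemySolution, newEdge10_ptolemySolution hα]
    simp only [ptolemySolution, cons_val]
    ring
  · ext v
    rw [newEdge9_ptolemySolution, newEdge10_ptolemySolution hα]
    simp only [ptolemySolution, cons_val, _root_.add_apply, _root_.sub_apply, _root_.smul_apply,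
      smul_eq_mul, dotProductL_apply, ContinuousLinearMap.proj_apply, gradNewEdge9_dotProduct,
      gradNewEdge10_dotProduct, gradNewEdge12_dotProduct]
    linear_combination v 4 * ((α ^ 2 - 1) * hβ - (1 + α)⁻¹ * hα) - v 6 * hα

theorem hasJacobianAt_flipEdges [NeZero (2 : 𝕜)] {α : 𝕜} (hα : α ^ 3 + α ^ 2 + α - 1 = 0) :
    HasJacobianAt flipEdges
      (replaceRows (gradNewEdge12 α (1 + α)⁻¹) (gradNewEdge10 α (1 + α)⁻¹) (gradNewEdge11 α)
        (gradNewEdge9 α)) (ptolemySolution α) := by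
  have hc (k : Fin 9) : HasFDerivAt (fun c : Fin 9 → 𝕜 ↦ c k) (dotProductL (Pi.single k 1))
      (ptolemySolution α) := by
    rw [dotProductL_single]
    exact hasFDerivAt_apply k _
  refine hasJacobianAt_iff.2 fun i ↦ ?_
  fin_cases i
  exacts [hc 0, hc 1, hc 2, hc 3, hasFDerivAt_newEdge12 hα, hasFDerivAt_newEdge10 hα, hc 6,
    hasFDerivAt_newEdge11 hα, hasFDerivAt_newEdge9 α]

theorem hasJacobianAt_ptolemyMonodromy [NeZero (2 : 𝕜)] {α : 𝕜}
    (hα : α ^ 3 + α ^ 2 + α - 1 = 0) :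
    HasJacobianAt ptolemyMonodromy (jacobianMonodromy α (1 + α)⁻¹) (ptolemySolution α) := by
  refine HasFDerivAt.congr_of_eventuallyEq
    ((hasJacobianAt_flipEdges hα).mulVec_left (negacyclicShift 𝕜 8)) ?_
  have h8 : ptolemySolution α 8 ≠ 0 := by simp [ptolemySolution]
  filter_upwards [(continuous_apply 5).continuousAt.eventually_ne (ptolemySolution_five_ne_zero hα),
    (continuous_apply 8).continuousAt.eventually_ne h8] with c hc5 hc8
  exact ptolemyMonodromy_eq_negacyclicShift_mulVec hc5 hc8

end Derivatives

end M036

open M036 in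
theorem m036_C3_torsion_geometric_class_general {𝕜 : Type*} [NontriviallyNormedField 𝕜]
    [NeZero (2 : 𝕜)] {α : 𝕜} (hα : α ^ 3 + α ^ 2 + α - 1 = 0) :
    DifferentiableAt 𝕜 ptolemyMonodromy (ptolemySolution α) ∧
      ∀ t : 𝕜,
        (t • (1 : Matrix (Fin 9) (Fin 9) 𝕜) - LinearMap.toMatrix'
            (fderiv 𝕜 ptolemyMonodromy (ptolemySolution α)).toLinearMap).det =
          t ^ 9 + (2 * α ^ 2 + 4 * α + 2) * t ^ 8 + (4 * α ^ 2 + 6 * α + 6) * t ^ 7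
            + (6 * α ^ 2 + 4 * α + 8) * t ^ 6 + (-(2 * α ^ 2) + 4 * α + 3) * t ^ 5
            + (2 * α ^ 2 - 4 * α - 3) * t ^ 4 - (6 * α ^ 2 + 4 * α + 8) * t ^ 3
            - (4 * α ^ 2 + 6 * α + 6) * t ^ 2 - (2 * α ^ 2 + 4 * α + 2) * t - 1 := by
  have hJ := hasJacobianAt_ptolemyMonodromy hα
  refine ⟨HasFDerivAt.differentiableAt hJ, fun t ↦ ?_⟩
  rw [hJ.toMatrix'_fderiv]
  exact det_smul_one_sub_jacobianMonodromy hα (mul_inv_cancel₀ (one_add_ne_zero_of_cubic hα)) t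

/-- The C³-torsion polynomial of m036 at the sign-deformed Ptolemy solution
(boundary obstruction class covering lifts of the geometric representation). -/
theorem m036_C3_torsion_geometric_class (α : ℂ) (hα : α ^ 3 + α ^ 2 + α - 1 = 0) :
    let C9 : (Fin 9 → ℂ) → ℂ := fun c => (-(c 2 * c 6) + c 4 * c 7) / c 8
    let C10 : (Fin 9 → ℂ) → ℂ := fun c => (-(c 1 * c 3) + c 0 * c 4) / c 5
    let C11 : (Fin 9 → ℂ) → ℂ := fun c =>
      (-(c 2 * c 3 * c 6) + c 3 * c 4 * c 7 + c 0 * c 2 * c 8) / (c 7 * c 8)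
    let C12 : (Fin 9 → ℂ) → ℂ := fun c =>
      (c 0 * c 4 * (-(c 2 * c 6) + c 4 * c 7)
          + c 1 * (c 2 * c 3 * c 6 - c 3 * c 4 * c 7 - c 5 * c 6 * c 8)) / (c 4 * c 5 * c 8)
    let F : (Fin 9 → ℂ) → (Fin 9 → ℂ) := fun c =>
      ![c 1, c 2, c 3, C12 c, C10 c, c 6, C11 c, C9 c, -c 0]
    let p : Fin 9 → ℂ := ![1, 1, 1, 1, α, -α - α ^ 2, -α - α ^ 2, -α, -1]
    DifferentiableAt ℂ F p ∧
      ∀ t : ℂ,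
        (t • (1 : Matrix (Fin 9) (Fin 9) ℂ) -
            LinearMap.toMatrix' (fderiv ℂ F p).toLinearMap).det =
          t ^ 9 + (2 * α ^ 2 + 4 * α + 2) * t ^ 8 + (4 * α ^ 2 + 6 * α + 6) * t ^ 7
            + (6 * α ^ 2 + 4 * α + 8) * t ^ 6 + (-(2 * α ^ 2) + 4 * α + 3) * t ^ 5
            + (2 * α ^ 2 - 4 * α - 3) * t ^ 4 - (6 * α ^ 2 + 4 * α + 8) * t ^ 3
            - (4 * α ^ 2 + 6 * α + 6) * t ^ 2 - (2 * α ^ 2 + 4 * α + 2) * t - 1 := by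
  exact m036_C3_torsion_geometric_class_general hα
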